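/- For every c > 0 and every integer n₁ ≥ 1, let Ŵ_c = {x ∈ ℍ : x₂ < c|x₁|} and l_{n₁} = [−n₁, n₁] × {⌈c n₁⌉}. Then for every w ∈ l_{n₁}, the stationary harmonic measure of w with respect to l_{n₁} ∪ Ŵ_c vanishes: lim_{N→∞} H_{l_{n₁} ∪ Ŵ_c, N}(w) = 0. -/

import Mathlib

open Filter

namespace SHM

/-- The upper half planar lattice `ℍ = {(x₁,x₂) ∈ ℤ² : x₂ ≥ 0}` (including the x-axis). -/
def upperH : Set (ℤ × ℤ) := {p | 0 ≤ p.2}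

/-- The horizontal line `L_n = {(x,n) : x ∈ ℤ}` of height `n`. -/
def lineH (n : ℤ) : Set (ℤ × ℤ) := {p | p.2 = n}

/-- The four unit steps of the planar simple random walk. -/
def dirs : Finset (ℤ × ℤ) := {(1,0), (-1,0), (0,1), (0,-1)}

/-- The position after `m` steps of the walk started at `z` whose first `n`
increments are given by `σ`. -/
def pos (z : ℤ × ℤ) {n : ℕ} (σ : Fin n → ℤ × ℤ) (m : ℕ) : ℤ × ℤ :=
  z + ∑ i ∈ Finset.univ.filter (fun i : Fin n => (i : ℕ) < m), σ i

/-- The probability that the first `n` increments of the simple random walk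
(each uniform on the four unit vectors) satisfy the predicate `E`. -/
noncomputable def stepProb (n : ℕ) (E : (Fin n → ℤ × ℤ) → Prop) : ℝ :=
  (Nat.card {σ : Fin n → ↥dirs // E fun i => ((σ i : ℤ × ℤ))} : ℝ) / 4 ^ n

/-- `P_z(S_{τ̄_A} = x)` : the walk started at `z` hits `A` (in finite time) for the
first time precisely at the point `x`.  Here `τ̄_A = min {m ≥ 0 : S_m ∈ A}`. -/
noncomputable def hitProb (z : ℤ × ℤ) (A : Set (ℤ × ℤ)) (x : ℤ × ℤ) : ℝ :=
  ∑' n : ℕ, stepProb n fun σ =>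
    pos z σ n = x ∧ x ∈ A ∧ ∀ m < n, pos z σ m ∉ A

/-- `P_z(τ̄_A < τ̄_B)` : the walk started at `z` hits `A` strictly before hitting `B`. -/
noncomputable def hitBeforeProb (z : ℤ × ℤ) (A B : Set (ℤ × ℤ)) : ℝ :=
  ∑' n : ℕ, stepProb n fun σ =>
    pos z σ n ∈ A ∧ pos z σ n ∉ B ∧ ∀ m < n, pos z σ m ∉ A ∧ pos z σ m ∉ B

/-- The stationary harmonic measure `H_{B,N}(x) = Σ_{z ∈ L_N \ B} P_z(S_{τ̄_{B ∪ L₀}} = x)`. -/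
noncomputable def harm (B : Set (ℤ × ℤ)) (N : ℕ) (x : ℤ × ℤ) : ℝ :=
  ∑' z : ↥(lineH (N : ℤ) \ B), hitProb (z : ℤ × ℤ) (B ∪ lineH 0) x

/-- The open linear wedge `Ŵ_c = {x ∈ ℍ : x₂ < c|x₁|}`. -/
def wedgeW (c : ℝ) : Set (ℤ × ℤ) := {x ∈ upperH | (x.2 : ℝ) < c * |(x.1 : ℝ)|}

/-- The horizontal segment `l_{n₁} = [−n₁, n₁] × {⌈c n₁⌉}`. -/
def segTop (c : ℝ) (n₁ : ℕ) : Set (ℤ × ℤ) :=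
  {x | -(n₁ : ℤ) ≤ x.1 ∧ x.1 ≤ (n₁ : ℤ) ∧ x.2 = ⌈c * (n₁ : ℝ)⌉}

/-!
Write `A = B ∪ L₀` and let `pₙ(z)` be the probability that the walk started at `z` first hits `A` at
time `n`, at the point `w`. Since the step distribution is symmetric, `n ↦ pₙ` is the evolution of a
unit mass started at `w`, spread by the walk and killed on `A`, so `∑_{z ∈ L_N} ∑ₙ pₙ(z)` is its
expected number of visits to `L_N`. A nonnegative `ψ` with `∑_d ψ(z + d) + 1_{L_N}(z) ≤ 4 ψ(z)` off
`A` pays for these visits: they number at most `∑_d ψ(w + d)`.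

Killing on the axis alone allows `ψ = min(y, N)`, which gives only a bounded number of visits. The
complement of the wedge is a cone strictly inside the half plane, and carries a positive
superharmonic function of faster than linear growth, `φ(x, y) = t (log t + C) - x² / t` with
`t = y + 1`. Thus `ψ = min(φ / log N, y, N)`, set to `0` outside the cone, is admissible, and it
tends to `0` at every fixed point.
-/

section StepProb

lemma stepProb_nonneg (n : ℕ) (E : (Fin n → ℤ × ℤ) → Prop) : 0 ≤ stepProb n E := by
  unfold stepProb
  positivity

lemma stepProb_zero (E : (Fin 0 → ℤ × ℤ) → Prop) [Decidable (E Fin.elim0)] :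
    stepProb 0 E = if E Fin.elim0 then 1 else 0 := by
  have hE : ∀ σ : Fin 0 → ↥dirs, (E fun i => (σ i : ℤ × ℤ)) ↔ E Fin.elim0 := fun σ => by
    rw [Subsingleton.elim (fun i => (σ i : ℤ × ℤ)) Fin.elim0]
  simp only [stepProb, hE]
  split_ifs with h <;> simp [h]

lemma stepProb_false (n : ℕ) : stepProb n (fun _ => False) = 0 := by
  simp [stepProb]

lemma stepProb_succ (n : ℕ) (E : (Fin (n + 1) → ℤ × ℤ) → Prop) :
    stepProb (n + 1) E = (∑ d ∈ dirs, stepProb n fun σ => E (Fin.cons d σ)) / 4 := by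
  have coe_cons : ∀ (d : ↥dirs) (σ : Fin n → ↥dirs),
      (fun i => ((Fin.cons d σ : Fin (n + 1) → ↥dirs) i : ℤ × ℤ)) =
        Fin.cons (d : ℤ × ℤ) fun i => (σ i : ℤ × ℤ) := fun d σ => by
    ext1 i
    cases i using Fin.cases <;> simp
  have splitFirst : {σ : Fin (n + 1) → ↥dirs // E fun i => (σ i : ℤ × ℤ)} ≃
      Σ d : ↥dirs, {σ : Fin n → ↥dirs // E (Fin.cons (d : ℤ × ℤ) fun i => (σ i : ℤ × ℤ))} :=
    ((Fin.consEquiv fun _ => ↥dirs).subtypeEquiv fun p => by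
        rw [← coe_cons]; rfl).symm.trans
      (Equiv.subtypeProdEquivSigmaSubtype fun (d : ↥dirs) (σ : Fin n → ↥dirs) =>
        E (Fin.cons (d : ℤ × ℤ) fun i => (σ i : ℤ × ℤ)))
  unfold stepProb
  rw [Nat.card_congr splitFirst, Nat.card_sigma, ← Finset.sum_div, div_div, ← pow_succ,
    ← Finset.sum_coe_sort dirs]
  push_cast
  rfl

end StepProb

section Pos

variable {n : ℕ} (z : ℤ × ℤ)

lemma pos_zero (σ : Fin n → ℤ × ℤ) : pos z σ 0 = z := by
  simp [pos]

lemma pos_cons_succ (d : ℤ × ℤ) (σ : Fin n → ℤ × ℤ) (m : ℕ) :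
    pos z (Fin.cons d σ : Fin (n + 1) → ℤ × ℤ) (m + 1) = pos (z + d) σ m := by
  simp [pos, Finset.sum_filter, Fin.sum_univ_succ, add_assoc]

end Pos

/-- The sum of `f` over the four neighbours of `z`, that is, four times the mean of `f` after one
step of the walk. Superharmonicity of `f` at `z` reads `neighborSum f z ≤ 4 * f z`. -/
def neighborSum (f : ℤ × ℤ → ℝ) (z : ℤ × ℤ) : ℝ :=
  ∑ d ∈ dirs, f (z + d)

lemma neighborSum_eq (f : ℤ × ℤ → ℝ) (z : ℤ × ℤ) :
    neighborSum f z =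
      f (z + (1, 0)) + f (z + (-1, 0)) + f (z + (0, 1)) + f (z + (0, -1)) := by
  simp [neighborSum, dirs, add_assoc]

lemma neighborSum_mono {f g : ℤ × ℤ → ℝ} {z : ℤ × ℤ} (h : ∀ d ∈ dirs, f (z + d) ≤ g (z + d)) :
    neighborSum f z ≤ neighborSum g z :=
  Finset.sum_le_sum h

lemma neighborSum_nonneg {f : ℤ × ℤ → ℝ} (hf : ∀ z, 0 ≤ f z) (z : ℤ × ℤ) : 0 ≤ neighborSum f z :=
  Finset.sum_nonneg fun _ _ => hf _

lemma support_neighborSum_finite {p : ℤ × ℤ → ℝ} (hp : p.support.Finite) :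
    (neighborSum p).support.Finite := by
  refine (dirs.finite_toSet.biUnion fun d _ => hp.preimage (add_left_injective d).injOn).subset ?_
  intro z hz
  obtain ⟨d, hd, hne⟩ := Finset.exists_ne_zero_of_sum_ne_zero hz
  exact Set.mem_biUnion hd hne

lemma summable_mul_of_support_finite {p : ℤ × ℤ → ℝ} (hp : p.support.Finite) (f : ℤ × ℤ → ℝ) :
    Summable fun z => f z * p z :=
  summable_of_hasFiniteSupport (hp.subset (Function.support_mul_subset_right _ _))

-- Self-adjointness of the transition operator: this is where the symmetry of the steps enters.
lemma tsum_mul_neighborSum {p : ℤ × ℤ → ℝ} (hp : p.support.Finite) (f : ℤ × ℤ → ℝ) :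
    ∑' z, f z * neighborSum p z = ∑' z, neighborSum f z * p z := by
  have summable_shift : ∀ d, Summable fun z => f z * p (z + d) := fun d =>
    summable_mul_of_support_finite (hp.preimage (add_left_injective d).injOn) f
  have shift : ∀ d, ∑' z, f z * p (z + d) = ∑' z, f (z + -d) * p z := fun d => by
    rw [← (Equiv.addRight d).tsum_eq fun z => f (z + -d) * p z]
    simp
  calc ∑' z, f z * neighborSum p z
      = ∑ d ∈ dirs, ∑' z, f z * p (z + d) := by
        simp only [neighborSum, Finset.mul_sum]
        exact Summable.tsum_finsetSum fun d _ => summable_shift d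
    _ = ∑ d ∈ dirs, ∑' z, f (z + -d) * p z := by simp only [shift]
    _ = ∑ d ∈ dirs, ∑' z, f (z + d) * p z :=
        Finset.sum_nbij' (-·) (-·) (by decide) (by decide) (by simp) (by simp) (by simp)
    _ = ∑' z, neighborSum f z * p z := by
        simp only [neighborSum, Finset.sum_mul]
        exact (Summable.tsum_finsetSum fun d _ => summable_mul_of_support_finite hp _).symm

/-- `P_z(τ̄_A = n, S_n = x)`: the walk started at `z` hits `A` for the first time at time `n`, at
the point `x`. -/
noncomputable def firstHitProb (A : Set (ℤ × ℤ)) (x : ℤ × ℤ) (n : ℕ) (z : ℤ × ℤ) : ℝ :=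
  stepProb n fun σ => pos z σ n = x ∧ x ∈ A ∧ ∀ m < n, pos z σ m ∉ A

section FirstHit

variable {A : Set (ℤ × ℤ)} {x z : ℤ × ℤ} {n : ℕ}

lemma hitProb_eq_tsum_firstHitProb (z : ℤ × ℤ) (A : Set (ℤ × ℤ)) (x : ℤ × ℤ) :
    hitProb z A x = ∑' n, firstHitProb A x n z :=
  rfl

lemma firstHitProb_nonneg : 0 ≤ firstHitProb A x n z :=
  stepProb_nonneg _ _

lemma hitProb_nonneg : 0 ≤ hitProb z A x :=
  tsum_nonneg fun _ => firstHitProb_nonneg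

open Classical in
lemma firstHitProb_zero : firstHitProb A x 0 z = if z = x ∧ x ∈ A then 1 else 0 := by
  simp [firstHitProb, stepProb_zero, pos_zero]

lemma firstHitProb_zero_of_notMem (hz : z ∉ A) : firstHitProb A x 0 z = 0 := by
  rw [firstHitProb_zero, if_neg (by rintro ⟨rfl, hx⟩; exact hz hx)]

lemma firstHitProb_succ_of_mem (hz : z ∈ A) : firstHitProb A x (n + 1) z = 0 := by
  rw [← stepProb_false (n + 1), firstHitProb]
  congr! 2 with σ
  exact iff_false_intro fun ⟨_, _, h⟩ => h 0 n.succ_pos (by rwa [pos_zero])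

lemma firstHitProb_succ_of_notMem (hz : z ∉ A) :
    firstHitProb A x (n + 1) z = neighborSum (firstHitProb A x n) z / 4 := by
  simp only [firstHitProb, stepProb_succ, neighborSum, pos_cons_succ, Nat.forall_lt_succ_left,
    pos_zero, hz, not_false_eq_true, true_and]

lemma four_mul_firstHitProb_succ_le (A : Set (ℤ × ℤ)) (x : ℤ × ℤ) (n : ℕ) (z : ℤ × ℤ) :
    4 * firstHitProb A x (n + 1) z ≤ neighborSum (firstHitProb A x n) z := by
  by_cases hz : z ∈ A
  · rw [firstHitProb_succ_of_mem hz, mul_zero]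
    exact neighborSum_nonneg (fun _ => firstHitProb_nonneg) z
  · rw [firstHitProb_succ_of_notMem hz, mul_div_cancel₀ _ four_ne_zero]

lemma support_firstHitProb_finite (A : Set (ℤ × ℤ)) (x : ℤ × ℤ) (n : ℕ) :
    (firstHitProb A x n).support.Finite := by
  induction n with
  | zero =>
    refine (Set.finite_singleton x).subset fun z hz => ?_
    by_contra hne
    exact hz (by rw [firstHitProb_zero, if_neg fun h => hne h.1])
  | succ n ih =>
    refine (support_neighborSum_finite ih).subset fun z hz => ?_
    have hpos : 0 < firstHitProb A x (n + 1) z := lt_of_le_of_ne firstHitProb_nonneg (Ne.symm hz)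
    exact ne_of_gt (by linarith [four_mul_firstHitProb_succ_le A x n z])

end FirstHit

section Lyapunov

variable {A : Set (ℤ × ℤ)} {ψ : ℤ × ℤ → ℝ}

lemma tsum_neighborSum_mul_firstHitProb_succ_le {F : Finset (ℤ × ℤ)} (hψ : ∀ z, 0 ≤ ψ z)
    (hF : ∀ z ∉ A, neighborSum ψ z + (F : Set (ℤ × ℤ)).indicator 1 z ≤ 4 * ψ z)
    (w : ℤ × ℤ) (n : ℕ) :
    ∑' z, neighborSum ψ z * firstHitProb A w (n + 1) z + ∑ z ∈ F, firstHitProb A w (n + 1) z ≤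
      ∑' z, neighborSum ψ z * firstHitProb A w n z := by
  set p := firstHitProb A w n
  set q := firstHitProb A w (n + 1)
  have hp : p.support.Finite := support_firstHitProb_finite A w n
  have hq : q.support.Finite := support_firstHitProb_finite A w (n + 1)
  have visits : ∑ z ∈ F, q z = ∑' z, (F : Set (ℤ × ℤ)).indicator 1 z * q z := by
    rw [sum_eq_tsum_indicator]
    simp [Set.indicator_apply]
  calc ∑' z, neighborSum ψ z * q z + ∑ z ∈ F, q z
      = ∑' z, (neighborSum ψ z + (F : Set (ℤ × ℤ)).indicator 1 z) * q z := by
        simp only [visits, add_mul]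
        exact ((summable_mul_of_support_finite hq _).tsum_add
          (summable_mul_of_support_finite hq _)).symm
    _ ≤ ∑' z, 4 * ψ z * q z := by
        refine Summable.tsum_le_tsum (fun z => ?_) (summable_mul_of_support_finite hq _)
          (summable_mul_of_support_finite hq _)
        by_cases hz : z ∈ A
        · simp [q, firstHitProb_succ_of_mem hz]
        · exact mul_le_mul_of_nonneg_right (hF z hz) firstHitProb_nonneg
    _ ≤ ∑' z, ψ z * neighborSum p z := by
        refine Summable.tsum_le_tsum (fun z => ?_) (summable_mul_of_support_finite hq _)
          (summable_mul_of_support_finite (support_neighborSum_finite hp) _)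
        rw [mul_comm 4, mul_assoc]
        exact mul_le_mul_of_nonneg_left (four_mul_firstHitProb_succ_le A w n z) (hψ z)
    _ = ∑' z, neighborSum ψ z * p z := tsum_mul_neighborSum hp ψ

lemma tsum_mul_firstHitProb_zero_le {f : ℤ × ℤ → ℝ} (hf : ∀ z, 0 ≤ f z) (w : ℤ × ℤ) :
    ∑' z, f z * firstHitProb A w 0 z ≤ f w := by
  classical
  rw [tsum_eq_single w fun z hz => by rw [firstHitProb_zero, if_neg fun h => hz h.1, mul_zero],
    firstHitProb_zero]
  split_ifs <;> simp [hf w]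

lemma sum_range_firstHitProb_le {F : Finset (ℤ × ℤ)} (hFA : ∀ z ∈ F, z ∉ A) (hψ : ∀ z, 0 ≤ ψ z)
    (hF : ∀ z ∉ A, neighborSum ψ z + (F : Set (ℤ × ℤ)).indicator 1 z ≤ 4 * ψ z)
    (w : ℤ × ℤ) (M : ℕ) :
    ∑ n ∈ Finset.range M, ∑ z ∈ F, firstHitProb A w n z ≤ neighborSum ψ w := by
  have weight_nonneg : ∀ z, 0 ≤ neighborSum ψ z := neighborSum_nonneg hψ
  have telescope : ∀ m, ∑' z, neighborSum ψ z * firstHitProb A w m z +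
      ∑ n ∈ Finset.range (m + 1), ∑ z ∈ F, firstHitProb A w n z ≤ neighborSum ψ w := by
    intro m
    induction m with
    | zero =>
      have no_visit : ∑ z ∈ F, firstHitProb A w 0 z = 0 :=
        Finset.sum_eq_zero fun z hz => firstHitProb_zero_of_notMem (hFA z hz)
      simpa [no_visit] using tsum_mul_firstHitProb_zero_le weight_nonneg w
    | succ m ih =>
      rw [Finset.sum_range_succ]
      linarith [tsum_neighborSum_mul_firstHitProb_succ_le hψ hF w m]
  cases M with
  | zero => simpa using weight_nonneg w
  | succ m =>
    have energy_nonneg : 0 ≤ ∑' z, neighborSum ψ z * firstHitProb A w m z :=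
      tsum_nonneg fun z => mul_nonneg (weight_nonneg z) firstHitProb_nonneg
    linarith [telescope m]

lemma sum_hitProb_le {F : Finset (ℤ × ℤ)} (hFA : ∀ z ∈ F, z ∉ A) (hψ : ∀ z, 0 ≤ ψ z)
    (hF : ∀ z ∉ A, neighborSum ψ z + (F : Set (ℤ × ℤ)).indicator 1 z ≤ 4 * ψ z) (w : ℤ × ℤ) :
    ∑ z ∈ F, hitProb z A w ≤ neighborSum ψ w := by
  have bound := sum_range_firstHitProb_le hFA hψ hF w
  have summable_firstHitProb : ∀ z ∈ F, Summable fun n => firstHitProb A w n z := fun z hz =>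
    summable_of_sum_range_le (fun _ => firstHitProb_nonneg) fun M =>
      (Finset.sum_le_sum fun n _ => Finset.single_le_sum
        (f := firstHitProb A w n) (fun _ _ => firstHitProb_nonneg) hz).trans (bound M)
  simp only [hitProb_eq_tsum_firstHitProb]
  rw [← Summable.tsum_finsetSum summable_firstHitProb]
  exact Real.tsum_le_of_sum_range_le
    (fun _ => Finset.sum_nonneg fun _ _ => firstHitProb_nonneg) bound

lemma tsum_hitProb_le {L : Set (ℤ × ℤ)} (hLA : Disjoint L A) (hψ : ∀ z, 0 ≤ ψ z)
    (hL : ∀ z ∉ A, neighborSum ψ z + L.indicator 1 z ≤ 4 * ψ z) (w : ℤ × ℤ) :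
    ∑' z : ↥L, hitProb z A w ≤ neighborSum ψ w := by
  refine Real.tsum_le_of_sum_le (fun _ => hitProb_nonneg) fun s => ?_
  have subset : ((s.map (.subtype _) : Finset (ℤ × ℤ)) : Set (ℤ × ℤ)) ⊆ L := by simp
  have indicator_le : ∀ z, (s.map (.subtype _) : Set (ℤ × ℤ)).indicator 1 z ≤
      L.indicator (1 : ℤ × ℤ → ℝ) z :=
    Set.indicator_le_indicator_of_subset subset fun _ => zero_le_one
  have := sum_hitProb_le (fun z hz => hLA.notMem_of_mem_left (subset hz)) hψ
    (fun z hz => (add_le_add_right (indicator_le z) _).trans (hL z hz)) w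
  rwa [Finset.sum_map] at this

end Lyapunov

/-- The cone left free by the wedge `Ŵ_c` and the axis: the points of positive height with
`c|x₁| ≤ x₂`. -/
def cone (c : ℝ) : Set (ℤ × ℤ) := {z | 1 ≤ z.2 ∧ c * |(z.1 : ℝ)| ≤ z.2}

lemma mem_cone_of_notMem_wedgeW {c : ℝ} {z : ℤ × ℤ} (hz : z ∉ wedgeW c) (h : 1 ≤ z.2) :
    z ∈ cone c :=
  ⟨h, not_lt.mp fun hlt => hz ⟨show (0 : ℤ) ≤ z.2 by lia, hlt⟩⟩

lemma abs_fst_le_of_mem_cone {c : ℝ} (hc : 0 < c) {z : ℤ × ℤ} (hz : z ∈ cone c) :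
    |(z.1 : ℝ)| ≤ c⁻¹ * z.2 :=
  (le_inv_mul_iff₀ hc).mpr hz.2

lemma dirs_bounds {d : ℤ × ℤ} (hd : d ∈ dirs) : |d.1| ≤ 1 ∧ -1 ≤ d.2 := by
  revert d
  decide

lemma snd_add_nonneg_of_mem_cone {c : ℝ} {z d : ℤ × ℤ} (hz : z ∈ cone c) (hd : d ∈ dirs) :
    0 ≤ (z + d).2 := by
  have hy : 1 ≤ z.2 := hz.1
  have hd₂ : -1 ≤ d.2 := (dirs_bounds hd).2
  rw [Prod.snd_add]
  lia

/-- A function of growth `t log t` on the upper half plane, superharmonic for the walk where `t > 1`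
and nonnegative where `t ≥ 1` and `x² ≤ C t²`. On the lattice it is used with `t = x₂ + 1`, which
keeps `t` away from the singularity at `0`. -/
noncomputable def barrier (C x t : ℝ) : ℝ := t * (Real.log t + C) - x ^ 2 / t

section Barrier

variable {C x t : ℝ}

lemma mul_log_le_barrier (ht : 0 < t) (hx : x ^ 2 ≤ C * t ^ 2) :
    t * Real.log t ≤ barrier C x t := by
  have : x ^ 2 / t ≤ C * t := (div_le_iff₀ ht).mpr (by linarith)
  unfold barrier
  linarith

lemma add_mul_log_add_le {u : ℝ} (ht : 0 < t) (hu : 0 < t + u) :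
    (t + u) * Real.log (t + u) ≤ (t + u) * (Real.log t + u / t) := by
  have log_le : Real.log ((t + u) / t) ≤ (t + u) / t - 1 :=
    Real.log_le_sub_one_of_pos (by positivity)
  rw [Real.log_div hu.ne' ht.ne', add_div, div_self ht.ne'] at log_le
  gcongr
  linarith

lemma mul_log_add_mul_log_le (ht : 1 < t) :
    (t + 1) * Real.log (t + 1) + (t - 1) * Real.log (t - 1) ≤ 2 * (t * Real.log t) + 2 / t := by
  have ht0 : 0 < t := by linarith
  have up := add_mul_log_add_le (u := 1) ht0 (by linarith)
  have down := add_mul_log_add_le (u := -1) ht0 (by linarith)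
  rw [← sub_eq_add_neg] at down
  have : (t + 1) * (Real.log t + 1 / t) + (t - 1) * (Real.log t + -1 / t) =
      2 * (t * Real.log t) + 2 / t := by ring
  linarith

lemma two_div_le_inv_add_inv (ht : 1 < t) : 2 / t ≤ (t + 1)⁻¹ + (t - 1)⁻¹ := by
  have h₁ : 0 < t - 1 := by linarith
  rw [inv_add_inv (by positivity) h₁.ne', div_le_div_iff₀ (by positivity) (by positivity)]
  nlinarith

lemma barrier_superharmonic (C x : ℝ) (ht : 1 < t) :
    barrier C (x + 1) t + barrier C (x - 1) t + barrier C x (t + 1) + barrier C x (t - 1) ≤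
      4 * barrier C x t := by
  have growth := mul_log_add_mul_log_le ht
  have convexity := mul_le_mul_of_nonneg_left (two_div_le_inv_add_inv ht) (sq_nonneg x)
  have horizontal : (x + 1) ^ 2 / t + (x - 1) ^ 2 / t = 2 * (x ^ 2 / t) + 2 / t := by ring
  have vertical : x ^ 2 * (2 / t) = 2 * (x ^ 2 / t) := by ring
  simp only [barrier, div_eq_mul_inv (x ^ 2) (t + 1), div_eq_mul_inv (x ^ 2) (t - 1)]
  linarith

end Barrier

/-- The function `z ↦ barrier C z₁ (z₂ + 1)` for the constant `C = (1 + c⁻¹)²`, which makes it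
nonnegative on `cone c` and on all neighbours of points of `cone c`. -/
noncomputable def coneBarrier (c : ℝ) (z : ℤ × ℤ) : ℝ :=
  barrier ((1 + c⁻¹) ^ 2) z.1 (z.2 + 1)

section ConeBarrier

variable {c : ℝ} {z d : ℤ × ℤ}

lemma mul_log_le_coneBarrier (hy : 0 ≤ z.2) (hx : |(z.1 : ℝ)| ≤ (1 + c⁻¹) * (z.2 + 1)) :
    ((z.2 : ℝ) + 1) * Real.log (z.2 + 1) ≤ coneBarrier c z := by
  have hy' : (0 : ℝ) ≤ z.2 := by exact_mod_cast hy
  refine mul_log_le_barrier (by linarith) ?_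
  rw [← mul_pow, ← sq_abs]
  gcongr

lemma mul_log_le_coneBarrier_of_mem_cone (hc : 0 < c) (hz : z ∈ cone c) :
    (z.2 : ℝ) * Real.log z.2 ≤ coneBarrier c z := by
  have hy : (1 : ℝ) ≤ z.2 := by exact_mod_cast hz.1
  have hc' : 0 < c⁻¹ := inv_pos.mpr hc
  refine le_trans ?_ (mul_log_le_coneBarrier (by have := hz.1; lia) ?_)
  · have := Real.log_nonneg hy
    gcongr <;> linarith
  · linarith [abs_fst_le_of_mem_cone hc hz]

lemma coneBarrier_add_nonneg (hc : 0 < c) (hz : z ∈ cone c) (hd : d ∈ dirs) :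
    0 ≤ coneBarrier c (z + d) := by
  obtain ⟨hd₁, hd₂⟩ := dirs_bounds hd
  have hy : 0 ≤ (z + d).2 := snd_add_nonneg_of_mem_cone hz hd
  have hy' : (0 : ℝ) ≤ (z + d).2 := by exact_mod_cast hy
  refine le_trans ?_ (mul_log_le_coneBarrier hy ?_)
  · exact mul_nonneg (by linarith) (Real.log_nonneg (by linarith))
  · have height : (z.2 : ℝ) ≤ (z + d).2 + 1 := by push_cast [Prod.snd_add]; exact_mod_cast by lia
    calc |((z + d).1 : ℝ)| ≤ |(z.1 : ℝ)| + |(d.1 : ℝ)| := by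
          push_cast [Prod.fst_add]; exact abs_add_le _ _
      _ ≤ c⁻¹ * ((z + d).2 + 1) + 1 := by
          gcongr
          · exact (abs_fst_le_of_mem_cone hc hz).trans (by gcongr)
          · exact_mod_cast hd₁
      _ ≤ (1 + c⁻¹) * ((z + d).2 + 1) := by linarith

lemma neighborSum_coneBarrier_le (c : ℝ) (hz : 1 ≤ z.2) :
    neighborSum (coneBarrier c) z ≤ 4 * coneBarrier c z := by
  have hy : (1 : ℝ) ≤ z.2 := by exact_mod_cast hz
  have := barrier_superharmonic ((1 + c⁻¹) ^ 2) z.1 (t := (z.2 : ℝ) + 1) (by linarith)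
  rw [neighborSum_eq]
  simpa [coneBarrier, sub_eq_add_neg, add_right_comm] using this

end ConeBarrier

/-- The Lyapunov function `min(φ / log N, x₂, N)`, set to `0` outside the cone, where `φ` is
`coneBarrier c`. The cap `N` is attained along `L_N`, where it makes the superharmonicity strict. -/
noncomputable def lyapunov (c : ℝ) (N : ℕ) : ℤ × ℤ → ℝ :=
  (cone c).indicator fun z => min (coneBarrier c z / Real.log N) (min z.2 N)

section LyapunovFunction

variable {c : ℝ} {N : ℕ} {z : ℤ × ℤ}

lemma lyapunov_nonneg (hc : 0 < c) (N : ℕ) (z : ℤ × ℤ) : 0 ≤ lyapunov c N z := by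
  refine Set.indicator_nonneg (fun z hz => ?_) z
  have hy : (1 : ℝ) ≤ z.2 := by exact_mod_cast hz.1
  have barrier_nonneg : 0 ≤ coneBarrier c z :=
    (mul_nonneg (by linarith) (Real.log_nonneg hy)).trans (mul_log_le_coneBarrier_of_mem_cone hc hz)
  exact le_min (div_nonneg barrier_nonneg (Real.log_natCast_nonneg N))
    (le_min (by linarith) N.cast_nonneg)

lemma lyapunov_of_snd_nonpos (hz : z.2 ≤ 0) : lyapunov c N z = 0 :=
  Set.indicator_of_notMem (fun h => by have := h.1; lia) _

lemma lyapunov_le_natCast (c : ℝ) (N : ℕ) (z : ℤ × ℤ) : lyapunov c N z ≤ N :=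
  Set.indicator_apply_le' (fun _ => (min_le_right _ _).trans (min_le_right _ _))
    fun _ => N.cast_nonneg

lemma lyapunov_le_snd (hz : 0 ≤ z.2) : lyapunov c N z ≤ z.2 :=
  Set.indicator_apply_le' (fun _ => (min_le_right _ _).trans (min_le_left _ _))
    fun _ => by exact_mod_cast hz

lemma lyapunov_le_coneBarrier_div (hz : 0 ≤ coneBarrier c z) :
    lyapunov c N z ≤ coneBarrier c z / Real.log N :=
  Set.indicator_apply_le' (fun _ => min_le_left _ _)
    fun _ => div_nonneg hz (Real.log_natCast_nonneg N)

lemma lyapunov_eq_natCast (hc : 0 < c) (hN : 2 ≤ N) (hz : z ∈ cone c) (hzN : z.2 = N) :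
    lyapunov c N z = N := by
  have log_pos : 0 < Real.log N := Real.log_pos (by exact_mod_cast hN)
  have height : (z.2 : ℝ) = N := by exact_mod_cast hzN
  have le_barrier := mul_log_le_coneBarrier_of_mem_cone hc hz
  rw [height] at le_barrier
  rw [lyapunov, Set.indicator_of_mem hz, height, min_self, min_eq_right]
  rwa [le_div_iff₀ log_pos]

lemma neighborSum_lyapunov_of_snd_neg (hz : z.2 < 0) : neighborSum (lyapunov c N) z = 0 := by
  rw [neighborSum_eq]
  simp (disch := simp; lia) only [lyapunov_of_snd_nonpos, add_zero]

lemma neighborSum_lyapunov_le (hc : 0 < c) (hz : z ∈ cone c) :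
    neighborSum (lyapunov c N) z ≤ 4 * lyapunov c N z := by
  have by_barrier : neighborSum (lyapunov c N) z ≤ 4 * (coneBarrier c z / Real.log N) :=
    calc neighborSum (lyapunov c N) z
        ≤ neighborSum (fun z => coneBarrier c z / Real.log N) z :=
          neighborSum_mono fun d hd => lyapunov_le_coneBarrier_div (coneBarrier_add_nonneg hc hz hd)
      _ = neighborSum (coneBarrier c) z / Real.log N := by simp only [neighborSum, Finset.sum_div]
      _ ≤ 4 * coneBarrier c z / Real.log N := by
          gcongr
          exact neighborSum_coneBarrier_le c hz.1
      _ = 4 * (coneBarrier c z / Real.log N) := mul_div_assoc _ _ _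
  have by_height : neighborSum (lyapunov c N) z ≤ 4 * z.2 := by
    refine (neighborSum_mono (g := fun z => (z.2 : ℝ)) fun d hd =>
      lyapunov_le_snd (snd_add_nonneg_of_mem_cone hz hd)).trans_eq ?_
    rw [neighborSum_eq]
    push_cast [Prod.snd_add]
    ring
  have by_cap : neighborSum (lyapunov c N) z ≤ 4 * N := by
    refine (neighborSum_mono (g := fun _ => (N : ℝ)) fun d _ =>
      lyapunov_le_natCast c N _).trans_eq ?_
    rw [neighborSum_eq]
    ring
  rw [lyapunov, Set.indicator_of_mem hz, ← lyapunov]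
  simp only [mul_min_of_nonneg _ _ (zero_le_four (α := ℝ)), le_min_iff]
  exact ⟨by_barrier, by_height, by_cap⟩

lemma neighborSum_lyapunov_add_one_le (hc : 0 < c) (hN : 2 ≤ N) (hz : z ∈ cone c)
    (hzN : z.2 = N) : neighborSum (lyapunov c N) z + 1 ≤ 4 * lyapunov c N z := by
  have below : lyapunov c N (z + (0, -1)) ≤ (z + (0, -1)).2 := lyapunov_le_snd (by simp; lia)
  have height : (z.2 : ℝ) = N := by exact_mod_cast hzN
  push_cast [Prod.snd_add, height] at below
  rw [neighborSum_eq, lyapunov_eq_natCast hc hN hz hzN]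
  linarith [lyapunov_le_natCast c N (z + (1, 0)), lyapunov_le_natCast c N (z + (-1, 0)),
    lyapunov_le_natCast c N (z + (0, 1))]

lemma tendsto_lyapunov_zero (hc : 0 < c) (z : ℤ × ℤ) :
    Tendsto (fun N : ℕ => lyapunov c N z) atTop (nhds 0) := by
  have bound : Tendsto (fun N : ℕ => |coneBarrier c z| / Real.log N) atTop (nhds 0) :=
    (Real.tendsto_log_atTop.comp tendsto_natCast_atTop_atTop).const_div_atTop _
  refine squeeze_zero (fun N => lyapunov_nonneg hc N z) (fun N => ?_) bound
  refine Set.indicator_apply_le' (fun _ => (min_le_left _ _).trans ?_)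
    fun _ => div_nonneg (abs_nonneg _) (Real.log_natCast_nonneg N)
  exact div_le_div_of_nonneg_right (le_abs_self _) (Real.log_natCast_nonneg N)

end LyapunovFunction

lemma harm_nonneg (B : Set (ℤ × ℤ)) (N : ℕ) (w : ℤ × ℤ) : 0 ≤ harm B N w :=
  tsum_nonneg fun _ => hitProb_nonneg

lemma harm_le_neighborSum_lyapunov {c : ℝ} (hc : 0 < c) {B : Set (ℤ × ℤ)} (hB : wedgeW c ⊆ B)
    {N : ℕ} (hN : 2 ≤ N) (w : ℤ × ℤ) : harm B N w ≤ neighborSum (lyapunov c N) w := by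
  refine tsum_hitProb_le ?_ (lyapunov_nonneg hc N) (fun z hz => ?_) w
  · refine Set.disjoint_union_right.mpr ⟨Set.disjoint_sdiff_left, Set.disjoint_left.mpr ?_⟩
    rintro z ⟨hzN : z.2 = N, -⟩ (hz₀ : z.2 = 0)
    lia
  rw [Set.mem_union, not_or] at hz
  have hz₀ : z.2 ≠ 0 := hz.2
  rcases lt_or_gt_of_ne hz₀ with hneg | hpos
  · have hzL : z ∉ lineH N \ B := fun ⟨(hzN : z.2 = N), _⟩ => by lia
    simp [hzL, neighborSum_lyapunov_of_snd_neg hneg, lyapunov_nonneg hc N z]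
  have hcone : z ∈ cone c := mem_cone_of_notMem_wedgeW (fun h => hz.1 (hB h)) hpos
  by_cases hzL : z ∈ lineH N \ B
  · simpa [hzL] using neighborSum_lyapunov_add_one_le hc hN hcone hzL.1
  · simpa [hzL] using neighborSum_lyapunov_le hc hcone

theorem harm_segment_on_wedge_tendsto_zero_general {c : ℝ} (hc : 0 < c) {B : Set (ℤ × ℤ)}
    (hB : wedgeW c ⊆ B) (w : ℤ × ℤ) :
    Tendsto (fun N : ℕ => harm B N w) atTop (nhds 0) := by
  have upper_tendsto : Tendsto (fun N : ℕ => neighborSum (lyapunov c N) w) atTop (nhds 0) := by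
    simpa [neighborSum] using tendsto_finsetSum dirs fun d _ => tendsto_lyapunov_zero hc (w + d)
  have harm_le : ∀ᶠ N : ℕ in atTop, harm B N w ≤ neighborSum (lyapunov c N) w :=
    (eventually_ge_atTop 2).mono fun N hN => harm_le_neighborSum_lyapunov hc hB hN w
  exact squeeze_zero' (.of_forall fun N => harm_nonneg B N w) harm_le upper_tendsto

/-- **The segment on top of a linear wedge has zero stationary harmonic measure.**
For every `c > 0`, every integer `n₁ ≥ 1` and every `w ∈ l_{n₁} = [−n₁,n₁] × {⌈c n₁⌉}`,
the stationary harmonic measure of `w` with respect to `l_{n₁} ∪ Ŵ_c` vanishes: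
`lim_{N→∞} H_{l_{n₁} ∪ Ŵ_c, N}(w) = 0`. -/
theorem harm_segment_on_wedge_tendsto_zero (c : ℝ) (hc : 0 < c) (n₁ : ℕ) (hn₁ : 1 ≤ n₁)
    (w : ℤ × ℤ) (hw : w ∈ segTop c n₁) :
    Tendsto (fun N : ℕ => harm (segTop c n₁ ∪ wedgeW c) N w) atTop (nhds 0) := by
  exact harm_segment_on_wedge_tendsto_zero_general hc Set.subset_union_right w

end SHM
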